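/- Let f, g : ℝⁿ₊ → ℝⁿ be continuous with g(x) ≥ 0 for all x ∈ ℝⁿ₊ and fᵢ(x) ≥ 0 for all x ∈ ℝⁿ₊ with xᵢ = 0, and suppose that for every w ∈ ℝⁿ₊ with w ≠ 0 there is an index i such that sup{gᵢ(y) : 0 ≤ y ≤ w} < −sup{fᵢ(x) : 0 ≤ x ≤ w, xᵢ = wᵢ}. Define h : ℝⁿ₊ → ℝⁿ by hᵢ(w) = sup{fᵢ(x) + gᵢ(y) : 0 ≤ x ≤ w, xᵢ = wᵢ, 0 ≤ y ≤ w}. Then there exists v in the standard simplex Δₙ with v ≫ 0 and h(v) ≪ 0, i.e. vᵢ > 0 and hᵢ(v) < 0 for all i. -/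

import Mathlib

/-!
Let `Uᵢ` be the set where `hᵢ < 0`. These sets are relatively open and cover the simplex, and `Uᵢ`
misses the face `wᵢ = 0`, since `hᵢ(w) ≥ fᵢ(w) + gᵢ(w)`; a Knaster–Kuratowski–Mazurkiewicz argument
gives a point in all of them. Its combinatorial core is a version of Sperner's lemma on the grid
points of the simplex: if every grid point is coloured by one of its nonzero coordinates, then some
points close to each other carry all colours. Scarf's dominant sets, for the rankings of the grid
points along each coordinate, take the place of the cells of a triangulation, because they obey the
same parity rule: an interior wall lies in no cell or in two, a boundary wall in exactly one.
-/

section Parity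

open Finset

variable {α β : Type*} [DecidableEq β]

theorem card_filter_image_erase_eq_image [DecidableEq α] {s : Finset α} {f : α → β}
    (hs : #s = #(s.image f) + 1) : #{a ∈ s | (s.erase a).image f = s.image f} = 2 := by
  obtain ⟨a, ha, b, hb, hab, hfab⟩ :=
    exists_ne_map_eq_of_card_image_lt (f := f) (s := s) (by lia)
  have image_erase {x y : α} (hx : x ∈ s) (hy : y ∈ s) (hxy : x ≠ y) (hf : f x = f y) :
      (s.erase x).image f = s.image f := by
    conv_rhs => rw [← insert_erase hx, image_insert, hf,
      insert_eq_of_mem (mem_image_of_mem f (mem_erase.2 ⟨hxy.symm, hy⟩))]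
  refine card_eq_two.2 ⟨a, b, hab, ?_⟩
  ext x
  simp only [mem_filter, mem_insert, mem_singleton]
  constructor
  · rintro ⟨hx, himage⟩
    have hinj : Set.InjOn f (s.erase x) :=
      card_image_iff.1 (by rw [himage, card_erase_of_mem hx, hs, Nat.add_sub_cancel])
    by_contra! hne
    exact hab (hinj (mem_erase.2 ⟨hne.1.symm, ha⟩) (mem_erase.2 ⟨hne.2.symm, hb⟩) hfab)
  · rintro (rfl | rfl)
    · exact ⟨ha, image_erase ha hb hab hfab⟩
    · exact ⟨hb, image_erase hb ha hab.symm hfab.symm⟩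

theorem even_card_powersetCard_filter_image_eq {P : Finset α} {c : α → β} {t : Finset β}
    (hP : #P = #t + 1) (hc : ¬Set.InjOn c P) :
    Even #{Q ∈ P.powersetCard #t | Q.image c = t} := by
  classical
  have hfacets : {Q ∈ P.powersetCard #t | Q.image c = t} =
      {a ∈ P | (P.erase a).image c = t}.image P.erase := by
    ext Q
    simp only [mem_filter, mem_powersetCard, mem_image]
    constructor
    · rintro ⟨⟨hQP, hQ⟩, himage⟩
      obtain ⟨a, ha, rfl⟩ := exists_eq_insert_iff.2 ⟨hQP, by rw [hQ, hP]⟩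
      exact ⟨a, by simp [erase_insert ha, himage], erase_insert ha⟩
    · rintro ⟨a, ⟨ha, himage⟩, rfl⟩
      exact ⟨⟨erase_subset a P, by rw [card_erase_of_mem ha, hP, Nat.add_sub_cancel]⟩, himage⟩
  rw [hfacets, card_image_of_injOn (P.erase_injOn.mono (filter_subset _ P))]
  by_cases ht : P.image c = t
  · subst ht
    rw [card_filter_image_erase_eq_image hP]
    exact even_two
  · have hcard : #(P.image c) ≤ #t :=
      Nat.le_of_lt_succ ((card_image_le.lt_of_ne (mt card_image_iff.1 hc)).trans_eq hP)
    rw [filter_eq_empty_iff.2, card_empty]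
    · exact Even.zero
    · rintro a - rfl
      exact ht (eq_of_subset_of_card_le (image_subset_image (erase_subset a P)) hcard).symm

/-- The parity argument of Sperner's lemma: the incidences `Q ⊆ P` in which `Q` carries exactly the
colours in `t` are counted from both sides. -/
theorem exists_injOn_of_odd_card_filter_subset [Finite α] [DecidableEq α]
    {F : Finset (Finset α)} {c : α → β} {t : Finset β}
    (hF : ∀ P ∈ F, #P = #t + 1) {Q₀ : Finset α} (hQ₀ : #Q₀ = #t)
    (hQ₀c : Q₀.image c = t) (hodd : Odd #{P ∈ F | Q₀ ⊆ P})
    (heven : ∀ Q, #Q = #t → Q.image c = t → Q ≠ Q₀ → Even #{P ∈ F | Q ⊆ P}) :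
    ∃ P ∈ F, Set.InjOn c P := by
  have := Fintype.ofFinite α
  by_contra! hF_not_inj
  let G : Finset (Finset α) := {Q ∈ univ.powersetCard #t | Q.image c = t}
  have hcount : ∑ Q ∈ G, #{P ∈ F | Q ⊆ P} = ∑ P ∈ F, #{Q ∈ G | Q ⊆ P} :=
    sum_card_bipartiteAbove_eq_sum_card_bipartiteBelow _
  have hright : Even (∑ P ∈ F, #{Q ∈ G | Q ⊆ P}) := by
    refine even_sum _ fun P hP => ?_
    have hfacets : {Q ∈ G | Q ⊆ P} = {Q ∈ P.powersetCard #t | Q.image c = t} := by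
      ext Q
      simp only [G, mem_filter, mem_powersetCard, subset_univ, true_and]
      tauto
    rw [hfacets]
    exact even_card_powersetCard_filter_image_eq (hF P hP) (hF_not_inj P hP)
  have hleft : Odd (∑ Q ∈ G, #{P ∈ F | Q ⊆ P}) := by
    have hQ₀G : Q₀ ∈ G := by simp [G, hQ₀, hQ₀c]
    rw [← add_sum_erase G _ hQ₀G]
    refine hodd.add_even (even_sum _ fun Q hQ => ?_)
    obtain ⟨hne, hQG⟩ := mem_erase.1 hQ
    obtain ⟨hcard, himage⟩ := mem_filter.1 hQG
    exact heven Q (mem_powersetCard.1 hcard).2 himage hne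
  exact Nat.not_even_iff_odd.2 hleft (hcount ▸ hright)

end Parity

section Scarf

open Finset

variable {X I L : Type*} [LinearOrder L]

/-- `y` is an upper bound of `σ` in at least one of the rankings `r i` with `i ∈ C`. -/
def Caps (r : I → X → L) (C : Finset I) (σ : Finset X) (y : X) : Prop :=
  ∃ i ∈ C, ∀ x ∈ σ, r i x ≤ r i y

/-- Scarf's dominant pairs, with the rankings reversed: no element lies strictly below the maximum
of `σ` in every ranking of `C`. -/
def IsDominant (r : I → X → L) (C : Finset I) (σ : Finset X) : Prop :=
  ∀ y, Caps r C σ y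

variable {r : I → X → L} {C D : Finset I} {σ τ : Finset X} {a b j : I} {y : X}

theorem Caps.mono (h : Caps r C σ y) (hCD : C ⊆ D) (hτσ : τ ⊆ σ) : Caps r D τ y := by
  obtain ⟨i, hi, hσ⟩ := h
  exact ⟨i, hCD hi, fun x hx => hσ x (hτσ hx)⟩

theorem IsDominant.mono (h : IsDominant r C σ) (hCD : C ⊆ D) (hτσ : τ ⊆ σ) : IsDominant r D τ :=
  fun y => (h y).mono hCD hτσ

variable [DecidableEq I]

theorem Caps.of_not_caps_erase (h : Caps r D τ y) (hy : ¬Caps r (D.erase j) τ y) :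
    ∀ x ∈ τ, r j x ≤ r j y := by
  obtain ⟨i, hi, hτ⟩ := h
  obtain rfl : i = j := by
    by_contra hij
    exact hy ⟨i, mem_erase.2 ⟨hij, hi⟩, hτ⟩
  exact hτ

open Classical in
/-- The indices of `D` that are not needed for the elements of `τ` to be maximal in `τ`. -/
noncomputable def redundant (r : I → X → L) (D : Finset I) (τ : Finset X) : Finset I :=
  {j ∈ D | ∀ x ∈ τ, Caps r (D.erase j) τ x}

theorem mem_redundant : j ∈ redundant r D τ ↔ j ∈ D ∧ ∀ x ∈ τ, Caps r (D.erase j) τ x := by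
  simp [redundant]

theorem card_redundant_empty (hD : #D = 1) : #(redundant r D ∅) = 1 := by
  simp [redundant, hD]

theorem card_redundant_of_nonempty (hr : ∀ i, (r i).Injective) (hτ : τ.Nonempty)
    (hcard : #D = #τ + 1) (hdom : IsDominant r D τ) : #(redundant r D τ) = 2 := by
  classical
  choose m hmτ hm using fun i => exists_max_image τ (r i) hτ
  have caps_iff {C : Finset I} {x : X} (hx : x ∈ τ) : Caps r C τ x ↔ x ∈ C.image m := by
    refine ⟨fun ⟨i, hi, hix⟩ => mem_image.2 ⟨i, hi, ?_⟩, fun h => ?_⟩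
    · exact hr i ((hix _ (hmτ i)).antisymm (hm i x hx))
    · obtain ⟨i, hi, rfl⟩ := mem_image.1 h
      exact ⟨i, hi, hm i⟩
  have himage : D.image m = τ :=
    (image_subset_iff.2 fun i _ => hmτ i).antisymm fun x hx => (caps_iff hx).1 (hdom x)
  rw [← card_filter_image_erase_eq_image (s := D) (f := m) (by rw [himage, hcard])]
  congr 1
  ext j
  have herase : (D.erase j).image m ⊆ τ := image_subset_iff.2 fun i _ => hmτ i
  rw [mem_redundant, mem_filter, himage, ← herase.ge_iff_eq]
  exact and_congr_right fun _ => forall₂_congr fun x hx => caps_iff hx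

/-- A pivot of the pair `(τ, D)` at the index `j`, encoded as an element of `X ⊕ I`: either `y` is
added to `τ` as the new maximum in ranking `j`, or, if no `y` is a candidate, `j` is removed from
`D`. -/
def Enters (r : I → X → L) (D : Finset I) (τ : Finset X) (j : I) : X ⊕ I → Prop
  | .inl y => ¬Caps r (D.erase j) τ y ∧ ∀ z, ¬Caps r (D.erase j) τ z → r j y ≤ r j z
  | .inr i => i = j ∧ IsDominant r (D.erase j) τ

theorem existsUnique_enters [Finite X] (hr : ∀ i, (r i).Injective) (D : Finset I) (τ : Finset X)
    (j : I) : ∃! z, Enters r D τ j z := by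
  by_cases hdom : IsDominant r (D.erase j) τ
  · refine ⟨.inr j, ⟨rfl, hdom⟩, ?_⟩
    rintro (y | i) h
    · exact absurd (hdom y) h.1
    · rw [h.1]
  · obtain ⟨y, hy, hmin⟩ := Set.exists_min_image {y | ¬Caps r (D.erase j) τ y} (r j)
      (Set.toFinite _) (not_forall.1 hdom)
    refine ⟨.inl y, ⟨hy, hmin⟩, ?_⟩
    rintro (z | i) h
    · rw [hr j ((h.2 y hy).antisymm (hmin z h.1))]
    · exact absurd h.2 hdom

theorem Enters.index_unique (hdom : IsDominant r D τ) {z : X ⊕ I} (ha : Enters r D τ a z)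
    (hb : Enters r D τ b z) : a = b := by
  rcases z with y | i
  · by_contra hab
    obtain ⟨i, hi, hτ⟩ := hdom y
    obtain rfl : i = a := by
      by_contra hia
      exact ha.1 ⟨i, mem_erase.2 ⟨hia, hi⟩, hτ⟩
    exact hb.1 ⟨i, mem_erase.2 ⟨hab, hi⟩, hτ⟩
  · exact ha.1.symm.trans hb.1

theorem Enters.notMem (hj : j ∈ redundant r D τ) (h : Enters r D τ j (.inl y)) : y ∉ τ :=
  fun hy => h.1 ((mem_redundant.1 hj).2 y hy)

theorem card_compl_toRight [Fintype I] {Q : Finset (X ⊕ I)} (hQ : #Q + 1 = Fintype.card I) :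
    #Q.toRightᶜ = #Q.toLeft + 1 := by
  have := card_toLeft_add_card_toRight (u := Q)
  rw [card_compl]
  lia

open Classical in
/-- The dominant pairs `(σ, C)` with `#σ = #C`, each encoded as the disjoint union of `σ` and the
complement of `C`, so that all cells have the same cardinality. -/
noncomputable def dominantCells [Fintype X] [Fintype I] (r : I → X → L) : Finset (Finset (X ⊕ I)) :=
  {P | #P = Fintype.card I ∧ IsDominant r P.toRightᶜ P.toLeft}

theorem mem_dominantCells [Fintype X] [Fintype I] {P : Finset (X ⊕ I)} :
    P ∈ dominantCells r ↔ #P = Fintype.card I ∧ IsDominant r P.toRightᶜ P.toLeft := by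
  simp only [dominantCells, mem_filter_univ]

section Pivoting

variable [DecidableEq X]

theorem Enters.isDominant_insert (hdom : IsDominant r D τ) (hj : j ∈ D)
    (h : Enters r D τ j (.inl y)) : IsDominant r D (insert y τ) := by
  intro z
  by_cases hz : Caps r (D.erase j) τ z
  · obtain ⟨i, hi, hτz⟩ := hz
    have hyi : ∃ x ∈ τ, r i y < r i x := by
      by_contra! hcon
      exact h.1 ⟨i, hi, hcon⟩
    obtain ⟨x, hx, hyx⟩ := hyi
    exact ⟨i, mem_of_mem_erase hi, (forall_mem_insert ..).2 ⟨hyx.le.trans (hτz x hx), hτz⟩⟩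
  · exact ⟨j, hj, (forall_mem_insert ..).2
      ⟨h.2 z hz, fun x hx => ((hdom y).of_not_caps_erase h.1 x hx).trans (h.2 z hz)⟩⟩

theorem IsDominant.exists_enters (hr : ∀ i, (r i).Injective) (hcard : #D = #τ + 1) (hy : y ∉ τ)
    (hdom : IsDominant r D (insert y τ)) : ∃ j ∈ redundant r D τ, Enters r D τ j (.inl y) := by
  choose i hiD hi using hdom
  have hinj : Set.InjOn i (insert y τ : Finset X) := fun u hu v hv huv =>
    hr (i u) ((huv ▸ hi v u hu).antisymm (hi u v hv))
  have hsurj : Set.SurjOn i (insert y τ : Finset X) D :=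
    surjOn_of_injOn_of_card_le i (fun x _ => hiD x) hinj (by rw [card_insert_of_notMem hy, hcard])
  have hne {x : X} (hx : x ∈ τ) : i x ≠ i y := fun h =>
    hy (hinj (mem_insert_of_mem hx) (mem_insert_self y τ) h ▸ hx)
  refine ⟨i y, mem_redundant.2 ⟨hiD y, fun x hx => ?_⟩, ?_, fun z hz => ?_⟩
  · exact ⟨i x, mem_erase.2 ⟨hne hx, hiD x⟩, fun u hu => hi x u (mem_insert_of_mem hu)⟩
  · rintro ⟨k, hk, hτ⟩
    obtain ⟨hky, hkD⟩ := mem_erase.1 hk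
    obtain ⟨x, hx, rfl⟩ := hsurj hkD
    rcases mem_insert.1 hx with rfl | hxτ
    · exact hky rfl
    · have hxy : x = y := hr (i x) ((hτ x hxτ).antisymm (hi x y (mem_insert_self y τ)))
      exact hy (hxy ▸ hxτ)
  · have hzy : i z = i y := by
      by_contra hne
      exact hz ⟨i z, mem_erase.2 ⟨hne, hiD z⟩, fun x hx => hi z x (mem_insert_of_mem hx)⟩
    exact hzy ▸ hi z y (mem_insert_self y τ)

variable [Fintype X] [Fintype I]

theorem insert_mem_dominantCells_iff (hr : ∀ i, (r i).Injective) {Q : Finset (X ⊕ I)}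
    (hQ : #Q + 1 = Fintype.card I) (hdom : IsDominant r Q.toRightᶜ Q.toLeft) {z : X ⊕ I}
    (hz : z ∉ Q) : insert z Q ∈ dominantCells r ↔
      ∃ j ∈ redundant r Q.toRightᶜ Q.toLeft, Enters r Q.toRightᶜ Q.toLeft j z := by
  rw [mem_dominantCells, card_insert_of_notMem hz, hQ, eq_self, true_and]
  rcases z with y | i
  · have hy : y ∉ Q.toLeft := by simpa using hz
    rw [toRight_insert_inl, toLeft_insert_inl]
    exact ⟨fun h => h.exists_enters hr (card_compl_toRight hQ) hy,
      fun ⟨j, hj, h⟩ => h.isDominant_insert hdom (mem_redundant.1 hj).1⟩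
  · rw [toRight_insert_inr, toLeft_insert_inr, compl_insert]
    constructor
    · exact fun h => ⟨i, mem_redundant.2 ⟨by simpa using hz, fun x _ => h x⟩, rfl, h⟩
    · rintro ⟨_, _, rfl, h⟩
      exact h

theorem card_dominantCells_filter_subset (hr : ∀ i, (r i).Injective) {Q : Finset (X ⊕ I)}
    (hQ : #Q + 1 = Fintype.card I) (hdom : IsDominant r Q.toRightᶜ Q.toLeft) :
    #{P ∈ dominantCells r | Q ⊆ P} = #(redundant r Q.toRightᶜ Q.toLeft) := by
  choose e he he_unique using existsUnique_enters hr Q.toRightᶜ Q.toLeft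
  have heQ {j : I} (hj : j ∈ redundant r Q.toRightᶜ Q.toLeft) : e j ∉ Q := by
    have hej := he j
    rcases hz : e j with y | i <;> rw [hz] at hej
    · simpa using hej.notMem hj
    · simpa [hej.1] using (mem_redundant.1 hj).1
  refine (card_bij (fun j _ => insert (e j) Q) (fun j hj => ?_) (fun j hj k _ hjk => ?_)
    fun P hP => ?_).symm
  · exact mem_filter.2
      ⟨(insert_mem_dominantCells_iff hr hQ hdom (heQ hj)).2 ⟨j, hj, he j⟩, subset_insert (e j) Q⟩
  · have hmem : e j ∈ insert (e k) Q := hjk ▸ mem_insert_self (e j) Q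
    have hejk : e j = e k := (mem_insert.1 hmem).resolve_right (heQ hj)
    exact (he j).index_unique hdom (hejk ▸ he k)
  · obtain ⟨hP, hQP⟩ := mem_filter.1 hP
    obtain ⟨z, hz, rfl⟩ := exists_eq_insert_iff.2 ⟨hQP, hQ.trans (mem_dominantCells.1 hP).1.symm⟩
    obtain ⟨j, hj, hjz⟩ := (insert_mem_dominantCells_iff hr hQ hdom hz).1 hP
    exact ⟨j, hj, by rw [he_unique j z hjz]⟩

theorem even_card_dominantCells_filter_subset (hr : ∀ i, (r i).Injective) {Q : Finset (X ⊕ I)}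
    (hQ : #Q + 1 = Fintype.card I) (hQ_left : Q.toLeft.Nonempty) :
    Even #{P ∈ dominantCells r | Q ⊆ P} := by
  by_cases hdom : IsDominant r Q.toRightᶜ Q.toLeft
  · rw [card_dominantCells_filter_subset hr hQ hdom,
      card_redundant_of_nonempty hr hQ_left (card_compl_toRight hQ) hdom]
    exact even_two
  · rw [filter_eq_empty_iff.2, card_empty]
    · exact Even.zero
    · exact fun P hP hQP => hdom ((mem_dominantCells.1 hP).2.mono
        (compl_subset_compl.2 (toRight_subset_toRight hQP)) (toLeft_subset_toLeft hQP))

theorem card_dominantCells_filter_map_inr_subset (hr : ∀ i, (r i).Injective) (k : I) :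
    #{P ∈ dominantCells r | (univ.erase k).map .inr ⊆ P} = 1 := by
  have hleft : ((univ.erase k).map .inr : Finset (X ⊕ I)).toLeft = ∅ := by ext; simp
  have hright : ((univ.erase k).map .inr : Finset (X ⊕ I)).toRightᶜ = {k} := by ext; simp
  have hdom : IsDominant r {k} (∅ : Finset X) := fun _ => ⟨k, by simp, by simp⟩
  rw [card_dominantCells_filter_subset hr, hleft, hright, card_redundant_empty (card_singleton k)]
  · rw [card_map, card_erase_add_one (mem_univ k), card_univ]
  · rwa [hleft, hright]

end Pivoting

/-- Scarf's theorem on dominant sets. -/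
theorem exists_isDominant_image [Finite X] [Finite I] (hr : ∀ i, (r i).Injective) (c : X → I) :
    ∃ σ : Finset X, IsDominant r (σ.image c) σ := by
  classical
  have := Fintype.ofFinite X
  have := Fintype.ofFinite I
  rcases isEmpty_or_nonempty X with hX | ⟨⟨x₀⟩⟩
  · exact ⟨∅, isEmptyElim⟩
  set k := c x₀
  have hk : #(univ.erase k) + 1 = Fintype.card I := card_erase_add_one (mem_univ k)
  -- As each index is coloured by itself, the elements of a rainbow cell `(σ, C)` take all colours
  -- in `C`.
  obtain ⟨P, hP, hinj⟩ := exists_injOn_of_odd_card_filter_subset (F := dominantCells r)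
    (c := Sum.elim c id) (t := univ.erase k) (Q₀ := (univ.erase k).map .inr)
    (fun P hP => (mem_dominantCells.1 hP).1.trans hk.symm) (card_map _) (by ext; simp)
    (card_dominantCells_filter_map_inr_subset hr k ▸ odd_one) fun Q hQ hQc hne => by
      refine even_card_dominantCells_filter_subset hr (hQ ▸ hk) ?_
      by_contra! hleft
      refine hne (eq_of_subset_of_card_le ?_ (by rw [card_map, hQ]))
      rintro (x | i) hz
      · exact absurd (mem_toLeft.2 hz) (by simp [hleft])
      · exact mem_map_of_mem _ (hQc ▸ mem_image_of_mem (Sum.elim c id) hz)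
  obtain ⟨hcard, hdom⟩ := mem_dominantCells.1 hP
  have hsurj : P.image (Sum.elim c id) = univ :=
    eq_univ_of_card _ ((card_image_of_injOn hinj).trans hcard)
  refine ⟨P.toLeft, hdom.mono (fun i hi => ?_) Subset.rfl⟩
  obtain ⟨x | j, hz, rfl⟩ := mem_image.1 (hsurj ▸ mem_univ i)
  · exact mem_image_of_mem c (mem_toLeft.2 hz)
  · exact absurd (mem_toRight.2 hz) (mem_compl.1 hi)

end Scarf

section Grid

open Finset

variable {ι : Type*} [Fintype ι]

theorem exists_le_sum_eq {M : ι → ℕ} {N : ℕ} (hN : N ≤ ∑ i, M i) :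
    ∃ y ≤ M, ∑ i, y i = N := by
  obtain ⟨y, hyM, hy⟩ := (Finsupp.equivFunOnFinite.symm M).exists_le_degree_eq N
    (by simpa [Finsupp.degree_eq_sum] using hN)
  exact ⟨y, hyM, by simpa [Finsupp.degree_eq_sum] using hy⟩

theorem sum_lt_add_card_of_forall_exists_le {M : ι → ℕ} {N : ℕ} (hM : ∀ l, M l ≠ 0)
    (h : ∀ y : ι → ℕ, ∑ l, y l = N → ∃ l, M l ≤ y l) : ∑ l, M l < N + Fintype.card ι := by
  by_contra! hN
  have hsub : ∑ l, (M l - 1) + Fintype.card ι = ∑ l, M l := by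
    rw [← card_univ, card_eq_sum_ones, ← sum_add_distrib]
    exact sum_congr rfl fun l _ => Nat.sub_add_cancel (Nat.one_le_iff_ne_zero.2 (hM l))
  obtain ⟨y, hyM, hy⟩ := exists_le_sum_eq (M := fun l => M l - 1) (N := N) (by lia)
  obtain ⟨l, hl⟩ := h y hy
  exact (hl.trans (hyM l)).not_gt (Nat.sub_one_lt (hM l))

theorem apply_lt_add_of_le_of_sum_lt {x y M : ι → ℕ} {k : ℕ} (hx : x ≤ M) (hy : y ≤ M)
    (h : ∑ l, M l < ∑ l, y l + k) (l : ι) : x l < y l + k := by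
  classical
  have hrest : ∑ j ∈ univ.erase l, y j ≤ ∑ j ∈ univ.erase l, M j := sum_le_sum fun j _ => hy j
  rw [← add_sum_erase univ M (mem_univ l), ← add_sum_erase univ y (mem_univ l)] at h
  have := hx l
  lia

theorem exists_finset_capping_grid (N : ℕ) (c : (ι → ℕ) → ι) :
    ∃ σ : Finset (ι → ℕ), (∀ x ∈ σ, ∑ i, x i = N) ∧
      ∀ y : ι → ℕ, ∑ i, y i = N → ∃ x₀ ∈ σ, ∀ x ∈ σ, x (c x₀) ≤ y (c x₀) := by
  classical
  let X := piAntidiag (univ : Finset ι) N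
  -- Ties between equal coordinates are broken by an enumeration of the grid.
  let r (i : ι) (x : X) : ℕ ×ₗ Fin (Fintype.card X) := toLex (x.1 i, Fintype.equivFin X x)
  have hr (i : ι) : (r i).Injective := fun x y hxy =>
    (Fintype.equivFin X).injective (Prod.ext_iff.1 (toLex.injective hxy)).2
  obtain ⟨σ, hσ⟩ := exists_isDominant_image hr fun x : X => c x
  refine ⟨σ.map (.subtype _), fun x hx => ?_, fun y hy => ?_⟩
  · obtain ⟨x, -, rfl⟩ := mem_map.1 hx
    exact (mem_piAntidiag.1 x.2).1
  · obtain ⟨i, hi, hcap⟩ := hσ ⟨y, by simpa [X] using hy⟩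
    obtain ⟨x₀, hx₀, rfl⟩ := mem_image.1 hi
    refine ⟨x₀, mem_map_of_mem _ hx₀, fun z hz => ?_⟩
    obtain ⟨x, hx, rfl⟩ := mem_map.1 hz
    exact Prod.Lex.monotone_fst _ _ (hcap x hx)

/-- Sperner's lemma on the integer points of a dilated simplex. -/
theorem exists_sperner_cell {N : ℕ} {c : (ι → ℕ) → ι}
    (hc : ∀ x : ι → ℕ, ∑ i, x i = N → x (c x) ≠ 0) :
    ∃ x : ι → ι → ℕ, (∀ i, ∑ l, x i l = N ∧ c (x i) = i) ∧
      ∀ i j l, x i l < x j l + Fintype.card ι := by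
  classical
  obtain ⟨σ, hσN, hσ⟩ := exists_finset_capping_grid N c
  have hcolor (i : ι) : ∃ x ∈ σ, c x = i := by
    obtain ⟨x, hx, hcap⟩ := hσ (Pi.single i N) (by simp)
    refine ⟨x, hx, ?_⟩
    by_contra hne
    exact hc x (hσN x hx) (by simpa [Pi.single_eq_of_ne hne] using hcap x hx)
  choose x hx hcx using hcolor
  let M (l : ι) : ℕ := σ.sup fun z => z l
  have hM {z : ι → ℕ} (hz : z ∈ σ) : z ≤ M := fun l => le_sup (f := fun z => z l) hz
  have hM_ne (l : ι) : M l ≠ 0 := fun h0 =>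
    hc (x l) (hσN _ (hx l)) (by simpa [hcx, h0] using hM (hx l) l)
  have hM_sum : ∑ l, M l < N + Fintype.card ι :=
    sum_lt_add_card_of_forall_exists_le hM_ne fun y hy =>
      let ⟨x₀, _, hcap⟩ := hσ y hy
      ⟨c x₀, Finset.sup_le hcap⟩
  exact ⟨x, fun i => ⟨hσN _ (hx i), hcx i⟩, fun i j =>
    apply_lt_add_of_le_of_sum_lt (hM (hx i)) (hM (hx j)) (by rwa [hσN _ (hx j)])⟩

end Grid

section Cover

variable {ι : Type*} [Fintype ι]

theorem exists_close_of_grid_coloring {δ : ℝ} (hδ : 0 < δ) {c : (ι → ℝ) → ι}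
    (hc : ∀ w ∈ stdSimplex ℝ ι, w (c w) ≠ 0) :
    ∃ q : ι → ι → ℝ, (∀ i, q i ∈ stdSimplex ℝ ι ∧ c (q i) = i) ∧ ∀ i j, dist (q i) (q j) < δ := by
  obtain ⟨N, hN⟩ := exists_nat_gt (Fintype.card ι / δ)
  have hN_pos : (0 : ℝ) < N := hN.trans_le' (by positivity)
  let p (x : ι → ℕ) : ι → ℝ := fun l => x l / N
  have hp {x : ι → ℕ} (hx : ∑ l, x l = N) : p x ∈ stdSimplex ℝ ι := by
    refine ⟨fun l => by positivity, ?_⟩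
    simp only [p, ← Finset.sum_div, ← Nat.cast_sum, hx, div_self hN_pos.ne']
  obtain ⟨x, hx, hx_close⟩ := exists_sperner_cell (N := N) (c := fun x => c (p x))
    fun x hx h0 => hc _ (hp hx) (by simp [p, h0])
  have hlt (i j l : ι) : p (x i) l - p (x j) l < δ := by
    have hxij : (x i l : ℝ) - x j l < Fintype.card ι := by
      rw [sub_lt_iff_lt_add']
      exact_mod_cast hx_close i j l
    rw [← sub_div, div_lt_iff₀' hN_pos]
    exact hxij.trans ((div_lt_iff₀ hδ).1 hN)
  refine ⟨fun i => p (x i), fun i => ⟨hp (hx i).1, (hx i).2⟩, fun i j => ?_⟩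
  exact (dist_pi_lt_iff hδ).2 fun l => abs_sub_lt_iff.2 ⟨hlt i j l, hlt j i l⟩

/-- A Knaster–Kuratowski–Mazurkiewicz theorem for open covers. -/
theorem stdSimplex_inter_iInter_nonempty [Nonempty ι] {U : ι → Set (ι → ℝ)}
    (hU : ∀ i, IsOpen (U i)) (hcover : stdSimplex ℝ ι ⊆ ⋃ i, U i)
    (hface : ∀ w ∈ stdSimplex ℝ ι, ∀ i, w ∈ U i → w i ≠ 0) :
    (stdSimplex ℝ ι ∩ ⋂ i, U i).Nonempty := by
  obtain ⟨δ, hδ, hball⟩ := lebesgue_number_lemma_of_metric (isCompact_stdSimplex ℝ ι) hU hcover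
  choose! c hc using hball
  obtain ⟨q, hq, hq_close⟩ := exists_close_of_grid_coloring hδ (c := c)
    fun w hw => hface w hw _ (hc w hw (Metric.mem_ball_self hδ))
  obtain ⟨i₀⟩ := ‹Nonempty ι›
  refine ⟨q i₀, (hq i₀).1, Set.mem_iInter.2 fun i => ?_⟩
  obtain ⟨hqi, hci⟩ := hq i
  exact hci ▸ hc _ hqi (hq_close i₀ i)

end Cover

section BoxSup

open Set

variable {ι : Type*} {φ ψ : (ι → ℝ) → ℝ} {i : ι} {w : ι → ℝ}

/-- The points of the box `[0, w]` which attain the bound `w` in coordinate `i`. -/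
def upperFace (i : ι) (w : ι → ℝ) : Set (ι → ℝ) :=
  {x ∈ Icc 0 w | x i = w i}

/-- The function `hᵢ(w)` of the paper, for `φ = fᵢ` and `ψ = gᵢ`. -/
noncomputable def boxSup (φ ψ : (ι → ℝ) → ℝ) (i : ι) (w : ι → ℝ) : ℝ :=
  sSup {r | ∃ x y, 0 ≤ x ∧ x ≤ w ∧ x i = w i ∧ 0 ≤ y ∧ y ≤ w ∧ r = φ x + ψ y}

theorem self_mem_upperFace (hw : 0 ≤ w) : w ∈ upperFace i w :=
  ⟨right_mem_Icc.2 hw, rfl⟩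

theorem isCompact_upperFace : IsCompact (upperFace i w) :=
  isCompact_Icc.inter_right (isClosed_eq (continuous_apply i) continuous_const)

theorem boxSup_neg_iff (hφ : ContinuousOn φ {x | 0 ≤ x}) (hψ : ContinuousOn ψ {x | 0 ≤ x})
    (hw : 0 ≤ w) :
    boxSup φ ψ i w < 0 ↔ ∀ x ∈ upperFace i w, ∀ y ∈ Icc 0 w, φ x + ψ y < 0 := by
  have himage : {r | ∃ x y, 0 ≤ x ∧ x ≤ w ∧ x i = w i ∧ 0 ≤ y ∧ y ≤ w ∧ r = φ x + ψ y} =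
      (fun z => φ z.1 + ψ z.2) '' (upperFace i w ×ˢ Icc 0 w) := by
    ext r
    simp only [upperFace, mem_ofPred_eq, mem_image, mem_prod, mem_Icc, Prod.exists, and_assoc,
      eq_comm (a := r)]
  have hcont : ContinuousOn (fun z : (ι → ℝ) × (ι → ℝ) => φ z.1 + ψ z.2)
      (upperFace i w ×ˢ Icc 0 w) :=
    (hφ.comp continuousOn_fst fun _ hz => hz.1.1.1).add
      (hψ.comp continuousOn_snd fun _ hz => hz.2.1)
  rw [boxSup, himage, (isCompact_upperFace.prod isCompact_Icc).sSup_lt_iff_of_continuous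
    ⟨(w, w), self_mem_upperFace hw, right_mem_Icc.2 hw⟩ hcont]
  exact ⟨fun h x hx y hy => h (x, y) ⟨hx, hy⟩, fun h z hz => h z.1 hz.1 z.2 hz.2⟩

theorem boxSup_neg_of_sSup_lt_neg_sSup (hφ : ContinuousOn φ {x | 0 ≤ x})
    (hψ : ContinuousOn ψ {x | 0 ≤ x}) (hw : 0 ≤ w)
    (h : sSup {r | ∃ y, 0 ≤ y ∧ y ≤ w ∧ r = ψ y} <
      -sSup {r | ∃ x, 0 ≤ x ∧ x ≤ w ∧ x i = w i ∧ r = φ x}) : boxSup φ ψ i w < 0 := by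
  have hψ_image : {r | ∃ y, 0 ≤ y ∧ y ≤ w ∧ r = ψ y} = ψ '' Icc 0 w := by
    ext r
    simp only [mem_ofPred_eq, mem_image, mem_Icc, and_assoc, eq_comm (a := r)]
  have hφ_image : {r | ∃ x, 0 ≤ x ∧ x ≤ w ∧ x i = w i ∧ r = φ x} = φ '' upperFace i w := by
    ext r
    simp only [upperFace, mem_ofPred_eq, mem_image, mem_Icc, and_assoc, eq_comm (a := r)]
  rw [hψ_image, hφ_image] at h
  refine (boxSup_neg_iff hφ hψ hw).2 fun x hx y hy => ?_
  have hφx := le_csSup (isCompact_upperFace.bddAbove_image (hφ.mono fun _ hx => hx.1.1))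
    (mem_image_of_mem φ hx)
  have hψy := le_csSup (isCompact_Icc.bddAbove_image (hψ.mono fun _ hy => hy.1))
    (mem_image_of_mem ψ hy)
  linarith

theorem isCompact_setOf_upperFace_Icc [Finite ι] {K : Set (ι → ℝ)} (hK : IsCompact K) (i : ι) :
    IsCompact {p : (ι → ℝ) × (ι → ℝ) × (ι → ℝ) |
      p.1 ∈ K ∧ p.2.1 ∈ upperFace i p.1 ∧ p.2.2 ∈ Icc 0 p.1} := by
  have := Fintype.ofFinite ι
  obtain ⟨b, hb⟩ := hK.isBounded.bddAbove
  refine (hK.prod (isCompact_Icc (a := 0) (b := b) |>.prod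
    (isCompact_Icc (a := 0) (b := b)))).of_isClosed_subset ?_ ?_
  · have hbox {u v : (ι → ℝ) × (ι → ℝ) × (ι → ℝ) → ι → ℝ} (hu : Continuous u)
        (hv : Continuous v) : IsClosed {p | u p ∈ Icc 0 (v p)} :=
      (isClosed_le continuous_const hu).and (isClosed_le hu hv)
    refine (hK.isClosed.preimage continuous_fst).and (((hbox ?_ ?_).and (isClosed_eq ?_ ?_)).and
      (hbox ?_ ?_)) <;> fun_prop
  · rintro ⟨w, x, y⟩ ⟨hw, ⟨hx, -⟩, hy⟩
    exact ⟨hw, ⟨hx.1, hx.2.trans (hb hw)⟩, hy.1, hy.2.trans (hb hw)⟩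

theorem isCompact_setOf_boxSup_nonneg [Finite ι] (hφ : ContinuousOn φ {x | 0 ≤ x})
    (hψ : ContinuousOn ψ {x | 0 ≤ x}) {K : Set (ι → ℝ)} (hK : IsCompact K)
    (hK_nonneg : ∀ w ∈ K, 0 ≤ w) (i : ι) : IsCompact {w ∈ K | 0 ≤ boxSup φ ψ i w} := by
  let T := {p : (ι → ℝ) × (ι → ℝ) × (ι → ℝ) |
    p.1 ∈ K ∧ p.2.1 ∈ upperFace i p.1 ∧ p.2.2 ∈ Icc 0 p.1}
  have hT : IsCompact T := isCompact_setOf_upperFace_Icc hK i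
  have hcont : ContinuousOn (fun p => φ p.2.1 + ψ p.2.2) T :=
    (hφ.comp (by fun_prop) fun _ hp => hp.2.1.1.1).add (hψ.comp (by fun_prop) fun _ hp => hp.2.2.1)
  have himage : {w ∈ K | 0 ≤ boxSup φ ψ i w} =
      Prod.fst '' (T ∩ (fun p => φ p.2.1 + ψ p.2.2) ⁻¹' Ici 0) := by
    ext w
    constructor
    · rintro ⟨hw, h⟩
      rw [← not_lt, boxSup_neg_iff hφ hψ (hK_nonneg w hw)] at h
      push Not at h
      obtain ⟨x, hx, y, hy, hxy⟩ := h
      exact ⟨(w, x, y), ⟨⟨hw, hx, hy⟩, hxy⟩, rfl⟩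
    · rintro ⟨⟨w, x, y⟩, ⟨⟨hw, hx, hy⟩, hxy⟩, rfl⟩
      refine ⟨hw, le_of_not_gt fun h => ?_⟩
      exact ((boxSup_neg_iff hφ hψ (hK_nonneg w hw)).1 h x hx y hy).not_ge hxy
  rw [himage]
  exact (hT.of_isClosed_subset (hcont.preimage_isClosed_of_isClosed hT.isClosed isClosed_Ici)
    inter_subset_left).image continuous_fst

end BoxSup

theorem exists_strictly_positive_v_general {ι : Type*} [Fintype ι] [Nonempty ι]
    {f g : (ι → ℝ) → ι → ℝ}
    (hf : ContinuousOn f {x | 0 ≤ x}) (hg : ContinuousOn g {x | 0 ≤ x})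
    (hfg : ∀ x ∈ stdSimplex ℝ ι, ∀ i, x i = 0 → 0 ≤ f x i + g x i)
    (hmain : ∀ w ∈ stdSimplex ℝ ι, ∃ i,
      sSup {r | ∃ y, 0 ≤ y ∧ y ≤ w ∧ r = g y i} <
        -sSup {r | ∃ x, 0 ≤ x ∧ x ≤ w ∧ x i = w i ∧ r = f x i}) :
    ∃ v ∈ stdSimplex ℝ ι, (∀ i, 0 < v i) ∧ ∀ i,
      sSup {r | ∃ x y, 0 ≤ x ∧ x ≤ v ∧ x i = v i ∧ 0 ≤ y ∧ y ≤ v ∧ r = f x i + g y i} < 0 := by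
  have hfi := continuousOn_pi.1 hf
  have hgi := continuousOn_pi.1 hg
  let h (i : ι) : (ι → ℝ) → ℝ := boxSup (f · i) (g · i) i
  let U (i : ι) : Set (ι → ℝ) := {w ∈ stdSimplex ℝ ι | 0 ≤ h i w}ᶜ
  have hU_open (i : ι) : IsOpen (U i) :=
    (isCompact_setOf_boxSup_nonneg (hfi i) (hgi i) (isCompact_stdSimplex ℝ ι)
      (fun _ hw => hw.1) i).isClosed.isOpen_compl
  have h_neg {w : ι → ℝ} (hw : w ∈ stdSimplex ℝ ι) {i : ι} (hwU : w ∈ U i) : h i w < 0 :=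
    lt_of_not_ge fun h_nonneg => hwU ⟨hw, h_nonneg⟩
  have hU_cover : stdSimplex ℝ ι ⊆ ⋃ i, U i := fun w hw => by
    obtain ⟨i, hi⟩ := hmain w hw
    exact Set.mem_iUnion.2
      ⟨i, fun h => (boxSup_neg_of_sSup_lt_neg_sSup (hfi i) (hgi i) hw.1 hi).not_ge h.2⟩
  have hU_face (w) (hw : w ∈ stdSimplex ℝ ι) (i : ι) (hwU : w ∈ U i) : w i ≠ 0 := fun hwi =>
    ((boxSup_neg_iff (hfi i) (hgi i) hw.1).1 (h_neg hw hwU) w (self_mem_upperFace hw.1) w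
      (Set.right_mem_Icc.2 hw.1)).not_ge (hfg w hw i hwi)
  obtain ⟨v, hv, hvU⟩ := stdSimplex_inter_iInter_nonempty hU_open hU_cover hU_face
  rw [Set.mem_iInter] at hvU
  exact ⟨v, hv, fun i => (hv.1 i).lt_of_ne' (hU_face v hv i (hvU i)), fun i => h_neg hv (hvU i)⟩

/-- Under the positivity conditions (P1), (P2) and condition (6) of the paper, there
exists `v` in the standard simplex with `v ≫ 0` and `h(v) ≪ 0`, where
`hᵢ(w) = sup{fᵢ(x)+gᵢ(y) : 0 ≤ x ≤ w, xᵢ = wᵢ, 0 ≤ y ≤ w}`. -/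
theorem exists_strictly_positive_v (n : ℕ) (hn : 0 < n)
    (f g : (Fin n → ℝ) → (Fin n → ℝ))
    (hf : ContinuousOn f {x : Fin n → ℝ | 0 ≤ x})
    (hg : ContinuousOn g {x : Fin n → ℝ | 0 ≤ x})
    (hgpos : ∀ x : Fin n → ℝ, 0 ≤ x → 0 ≤ g x)
    (hfpos : ∀ x : Fin n → ℝ, 0 ≤ x → ∀ i, x i = 0 → 0 ≤ f x i)
    (hmain : ∀ w : Fin n → ℝ, 0 ≤ w → w ≠ 0 → ∃ i : Fin n,
      sSup {r : ℝ | ∃ y : Fin n → ℝ, 0 ≤ y ∧ y ≤ w ∧ r = g y i} <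
        - sSup {r : ℝ | ∃ x : Fin n → ℝ, 0 ≤ x ∧ x ≤ w ∧ x i = w i ∧ r = f x i}) :
    ∃ v ∈ stdSimplex ℝ (Fin n), (∀ i : Fin n, 0 < v i) ∧ ∀ i : Fin n,
      sSup {r : ℝ | ∃ x y : Fin n → ℝ, 0 ≤ x ∧ x ≤ v ∧ x i = v i ∧
          0 ≤ y ∧ y ≤ v ∧ r = f x i + g y i} < 0 := by
  have : Nonempty (Fin n) := ⟨⟨0, hn⟩⟩
  refine exists_strictly_positive_v_general hf hg
    (fun x hx i hxi => add_nonneg (hfpos x hx.1 i hxi) (hgpos x hx.1 i))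
    fun w hw => hmain w hw.1 ?_
  rintro rfl
  simpa using hw.2
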